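/- The Ramsey–Turán density satisfies ρ_5(12) ≤ 10/19; equivalently, for every δ > 0 there exist ε > 0 and n_0 such that every K_{12}-free graph G on n ≥ n_0 vertices with α_5(G) ≤ ε·n has at most (10/19 + δ)·C(n,2) edges. -/

import Mathlib

/-!
Apply the regularity lemma to `G`. To a pair of distinct clusters `A`, `B` forming an `ε`-uniform
pair of density `d` give the weight `W A B = ⌈5 (d - 2η)⌉₊ ∈ {0, …, 5}`, and give weight `0` to all
other pairs. Up to an error `O(η n²)` the number of ordered adjacent pairs of `G` is
`(1/5) ∑ W A B |A| |B|`, so it suffices to bound this quadratic form by `(50/19) n²`.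

*Local structure* (`Reduced.admissible`). Any set of more than `α₅(G)` vertices contains a `K₅`.
If a `K₅` consists of vertices of density above `(w - 1)/5` towards a set `B`, then by double
counting many vertices of `B` are joined to the same `w` of its vertices
(`exists_common_subset`). Hence a cluster whose weights to the clusters of `s` are `W i j` can be
put in front of an embedding into `s` and contributes `5 - ∑ (5 - W i j)` vertices of a clique
(`Reduced.emb_insert`), or a single vertex as soon as all these weights are positive
(`Reduced.emb_insert_one`). Two clusters therefore carry a clique on `5 + W i j` vertices, three
clusters one on `W i j + W i k + W j k` vertices, and every further cluster adds one vertex. As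
`G` has no `K₁₂`, in sets of clusters with pairwise positive weights all triangles have weight at
most `11`; with four or more clusters weights are at most `4` and triangles at most `10`; with
five or more clusters weights are at most `3`; with six or more they are at most `2`.

*Weighted Turán problem* (`weighted_turan`). Moving the mass of one of two clusters of mutual
weight `0` onto the other does not decrease the form, so only sets with pairwise positive weights
matter. On these the bound is a finite list of inequalities between quadratic forms; equality
holds for the triangle of weights `5, 5, 1` with masses in proportion `9 : 5 : 5`, which is where
`10/19` comes from.
-/

open Finset
open scoped Classical

/-- `α_p(G)`: the largest size of a vertex subset inducing a `K_p`-free subgraph. -/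
noncomputable def alphaP {V : Type} [Fintype V] (p : ℕ) (G : SimpleGraph V) : ℕ :=
  sSup {k : ℕ | ∃ s : Finset V, s.card = k ∧ ∀ t : Finset V, t ⊆ s → ¬ G.IsNClique p t}

/-- The number of edges of `G`. -/
noncomputable def edgeCount {V : Type} [Fintype V] (G : SimpleGraph V) : ℕ :=
  G.edgeSet.ncard

/-! ### Quadratic forms in at most four variables -/

/-- The three-variable bound. Equality occurs for `(p, q, r) = (1, 5, 5)` and
`x : y : z = 5 : 5 : 9`, and its permutations. -/
theorem tri_form (x y z p q r : ℝ) (hx : 0 ≤ x) (hy : 0 ≤ y) (hz : 0 ≤ z)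
    (hp : p ≤ 5) (hq : q ≤ 5) (hr : r ≤ 5) (h : p + q + r ≤ 11) :
    19 * (p * (x * y) + q * (x * z) + r * (y * z)) ≤ 25 * (x + y + z) ^ 2 := by
  have hxy := mul_nonneg hx hy
  have hxz := mul_nonneg hx hz
  have hyz := mul_nonneg hy hz
  -- The deficits `5 - p`, `5 - q`, `5 - r` add up to at least `4`, so the worst case puts the
  -- whole deficit on the smallest of the three products.
  have key : ∀ m, m ≤ x * y → m ≤ x * z → m ≤ y * z → 0 ≤ m →
      p * (x * y) + q * (x * z) + r * (y * z) ≤ 5 * (x * y + x * z + y * z) - 4 * m := by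
    intro m h1 h2 h3 h0
    nlinarith [mul_le_mul_of_nonneg_left h1 (sub_nonneg.2 hp),
      mul_le_mul_of_nonneg_left h2 (sub_nonneg.2 hq),
      mul_le_mul_of_nonneg_left h3 (sub_nonneg.2 hr)]
  rcases le_total (x * y) (x * z) with h1 | h1 <;> rcases le_total (x * y) (y * z) with h2 | h2 <;>
    rcases le_total (x * z) (y * z) with h3 | h3
  all_goals first
    | nlinarith [key (x * y) (by linarith) (by linarith) (by linarith) hxy,
        sq_nonneg (10 * z - 9 * (x + y)), sq_nonneg (x - y)]
    | nlinarith [key (x * z) (by linarith) (by linarith) (by linarith) hxz,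
        sq_nonneg (10 * y - 9 * (x + z)), sq_nonneg (x - z)]
    | nlinarith [key (y * z) (by linarith) (by linarith) (by linarith) hyz,
        sq_nonneg (10 * x - 9 * (y + z)), sq_nonneg (y - z)]

/-- Four clusters with weight `4` on the star centred at `x` and `2` elsewhere. This and the next
three forms are the maximal weightings of four clusters by weights at most `4`, at least one of
them `4`, with all triangles at most `10`. -/
theorem form_star (x y z t : ℝ) :
    19 * (4 * (x * y + x * z + x * t) + 2 * (y * z + y * t + z * t)) ≤ 25 * (x + y + z + t) ^ 2 := by
  linarith [sq_nonneg (25 * x - 13 * (y + z + t)), sq_nonneg (y - z), sq_nonneg (y - t),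
    sq_nonneg (z - t), sq_nonneg y, sq_nonneg z, sq_nonneg t]

/-- Weight `4` on the four-cycle `x y z t` and `2` on its diagonals. -/
theorem form_cycle (x y z t : ℝ) :
    19 * (4 * (x * y + y * z + z * t + t * x) + 2 * (x * z + y * t)) ≤
      25 * (x + y + z + t) ^ 2 := by
  linarith [sq_nonneg (x - z), sq_nonneg (y - t), sq_nonneg (x + z - y - t), sq_nonneg (x + z),
    sq_nonneg (y + t)]

/-- Weight `4` on `xy` and `xz`, `2` on `yz`, and `3` on the pairs containing `t`. -/
theorem form_path (x y z t : ℝ) :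
    19 * (4 * (x * y + x * z) + 2 * (y * z) + 3 * (t * (x + y + z))) ≤
      25 * (x + y + z + t) ^ 2 := by
  linarith [sq_nonneg (50 * x - 26 * y - 26 * z - 7 * t), sq_nonneg (y - z), sq_nonneg (y - t),
    sq_nonneg (z - t), sq_nonneg y, sq_nonneg z, sq_nonneg t]

/-- Weight `4` on the matching `xy`, `zt` and `3` elsewhere. -/
theorem form_matching (x y z t : ℝ) :
    19 * (4 * (x * y + z * t) + 3 * ((x + y) * (z + t))) ≤ 25 * (x + y + z + t) ^ 2 := by
  linarith [sq_nonneg (x - y), sq_nonneg (z - t), sq_nonneg (x + y - z - t), sq_nonneg (x + y),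
    sq_nonneg (z + t)]

/-- The four-variable bound when the weight of the first pair is `4`: every weighting is dominated
by one of the four maximal forms. -/
theorem quad_form_aux (x y z t : ℝ) (ab ac ad bc bd cd : ℕ)
    (hx : 0 ≤ x) (hy : 0 ≤ y) (hz : 0 ≤ z) (ht : 0 ≤ t) (h0 : ab = 4)
    (hac : ac ≤ 4) (had : ad ≤ 4) (hbc : bc ≤ 4) (hbd : bd ≤ 4) (hcd : cd ≤ 4)
    (h1 : ab + ac + bc ≤ 10) (h2 : ab + ad + bd ≤ 10) (h3 : ac + ad + cd ≤ 10)
    (h4 : bc + bd + cd ≤ 10) :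
    19 * (ab * (x * y) + ac * (x * z) + ad * (x * t) + bc * (y * z) + bd * (y * t) + cd * (z * t))
      ≤ 25 * (x + y + z + t) ^ 2 := by
  have hxy := mul_nonneg hx hy
  have hxz := mul_nonneg hx hz
  have hxt := mul_nonneg hx ht
  have hyz := mul_nonneg hy hz
  have hyt := mul_nonneg hy ht
  have hzt := mul_nonneg hz ht
  have mono : ∀ ac' ad' bc' bd' cd' : ℕ, ac ≤ ac' → ad ≤ ad' → bc ≤ bc' → bd ≤ bd' → cd ≤ cd' →
      ab * (x * y) + ac * (x * z) + ad * (x * t) + bc * (y * z) + bd * (y * t) + cd * (z * t) ≤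
      4 * (x * y) + ac' * (x * z) + ad' * (x * t) + bc' * (y * z) + bd' * (y * t)
        + cd' * (z * t) := by
    intro ac' ad' bc' bd' cd' _ _ _ _ _
    rw [h0]
    push_cast
    gcongr
  have c1 : (ac = 4 ∧ bc ≤ 2) ∨ (ac ≤ 3 ∧ bc ≤ 3) ∨ (ac ≤ 2 ∧ bc = 4) := by omega
  have c2 : (ad = 4 ∧ bd ≤ 2) ∨ (ad ≤ 3 ∧ bd ≤ 3) ∨ (ad ≤ 2 ∧ bd = 4) := by omega
  have c3 : cd ≤ 3 ∨ cd = 4 := by omega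
  rcases c1 with ⟨p1, p2⟩ | ⟨p1, p2⟩ | ⟨p1, p2⟩ <;> rcases c2 with ⟨q1, q2⟩ | ⟨q1, q2⟩ | ⟨q1, q2⟩
  · have := mono 4 4 2 2 2 (by omega) (by omega) (by omega) (by omega) (by omega)
    push_cast at this
    linarith [form_star x y z t]
  · rcases c3 with c3 | c3
    · have := mono 4 3 2 3 3 (by omega) (by omega) (by omega) (by omega) (by omega)
      push_cast at this
      linarith [form_path x y z t]
    · have := mono 4 2 2 4 4 (by omega) (by omega) (by omega) (by omega) (by omega)
      push_cast at this
      linarith [form_cycle x y t z]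
  · have := mono 4 2 2 4 4 (by omega) (by omega) (by omega) (by omega) (by omega)
    push_cast at this
    linarith [form_cycle x y t z]
  · rcases c3 with c3 | c3
    · have := mono 3 4 3 2 3 (by omega) (by omega) (by omega) (by omega) (by omega)
      push_cast at this
      linarith [form_path x y t z]
    · have := mono 2 4 4 2 4 (by omega) (by omega) (by omega) (by omega) (by omega)
      push_cast at this
      linarith [form_cycle x y z t]
  · have := mono 3 3 3 3 4 (by omega) (by omega) (by omega) (by omega) (by omega)
    push_cast at this
    linarith [form_matching x y z t]
  · rcases c3 with c3 | c3
    · have := mono 3 2 3 4 3 (by omega) (by omega) (by omega) (by omega) (by omega)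
      push_cast at this
      linarith [form_path y x t z]
    · have := mono 4 2 2 4 4 (by omega) (by omega) (by omega) (by omega) (by omega)
      push_cast at this
      linarith [form_cycle x y t z]
  · have := mono 2 4 4 2 4 (by omega) (by omega) (by omega) (by omega) (by omega)
    push_cast at this
    linarith [form_cycle x y z t]
  · rcases c3 with c3 | c3
    · have := mono 2 3 4 3 3 (by omega) (by omega) (by omega) (by omega) (by omega)
      push_cast at this
      linarith [form_path y x z t]
    · have := mono 2 4 4 2 4 (by omega) (by omega) (by omega) (by omega) (by omega)
      push_cast at this
      linarith [form_cycle x y z t]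
  · have := mono 2 2 4 4 2 (by omega) (by omega) (by omega) (by omega) (by omega)
    push_cast at this
    linarith [form_star y x z t]

/-- The four-variable bound: either some weight is `4`, and `quad_form_aux` applies after a
permutation, or all weights are at most `3`. -/
theorem quad_form (x y z t : ℝ) (ab ac ad bc bd cd : ℕ)
    (hx : 0 ≤ x) (hy : 0 ≤ y) (hz : 0 ≤ z) (ht : 0 ≤ t) (hab : ab ≤ 4)
    (hac : ac ≤ 4) (had : ad ≤ 4) (hbc : bc ≤ 4) (hbd : bd ≤ 4) (hcd : cd ≤ 4)
    (h1 : ab + ac + bc ≤ 10) (h2 : ab + ad + bd ≤ 10) (h3 : ac + ad + cd ≤ 10)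
    (h4 : bc + bd + cd ≤ 10) :
    19 * (ab * (x * y) + ac * (x * z) + ad * (x * t) + bc * (y * z) + bd * (y * t) + cd * (z * t))
      ≤ 25 * (x + y + z + t) ^ 2 := by
  by_cases e1 : ab = 4
  · exact quad_form_aux x y z t ab ac ad bc bd cd hx hy hz ht e1 hac had hbc hbd hcd h1 h2 h3 h4
  by_cases e2 : ac = 4
  · have := quad_form_aux x z y t ac ab ad bc cd bd hx hz hy ht e2 (by omega) (by omega) (by omega)
      (by omega) (by omega) (by omega) (by omega) (by omega) (by omega)
    linarith
  by_cases e3 : ad = 4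
  · have := quad_form_aux x t z y ad ac ab cd bd bc hx ht hz hy e3 (by omega) (by omega) (by omega)
      (by omega) (by omega) (by omega) (by omega) (by omega) (by omega)
    linarith
  by_cases e4 : bc = 4
  · have := quad_form_aux y z x t bc ab bd ac cd ad hy hz hx ht e4 (by omega) (by omega) (by omega)
      (by omega) (by omega) (by omega) (by omega) (by omega) (by omega)
    linarith
  by_cases e5 : bd = 4
  · have := quad_form_aux y t x z bd ab bc ad cd ac hy ht hx hz e5 (by omega) (by omega) (by omega)
      (by omega) (by omega) (by omega) (by omega) (by omega) (by omega)
    linarith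
  by_cases e6 : cd = 4
  · have := quad_form_aux z t x y cd ac bc ad bd ab hz ht hx hy e6 (by omega) (by omega) (by omega)
      (by omega) (by omega) (by omega) (by omega) (by omega) (by omega)
    linarith
  have b : ∀ w : ℕ, w ≤ 4 → w ≠ 4 → (w : ℝ) ≤ 3 := fun w h h' => by
    exact_mod_cast (by omega : w ≤ 3)
  have := mul_le_mul_of_nonneg_right (b ab hab e1) (mul_nonneg hx hy)
  have := mul_le_mul_of_nonneg_right (b ac hac e2) (mul_nonneg hx hz)
  have := mul_le_mul_of_nonneg_right (b ad had e3) (mul_nonneg hx ht)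
  have := mul_le_mul_of_nonneg_right (b bc hbc e4) (mul_nonneg hy hz)
  have := mul_le_mul_of_nonneg_right (b bd hbd e5) (mul_nonneg hy ht)
  have := mul_le_mul_of_nonneg_right (b cd hcd e6) (mul_nonneg hz ht)
  nlinarith [sq_nonneg (x - y), sq_nonneg (x - z), sq_nonneg (x - t), sq_nonneg (y - z),
    sq_nonneg (y - t), sq_nonneg (z - t)]

/-! ### The weighted Turán problem -/

/-- The quadratic form of the weights `W`, restricted to the index set `s`; each unordered pair is
counted twice. -/
noncomputable def qf {ι : Type*} (W : ι → ι → ℕ) (x : ι → ℝ) (s : Finset ι) : ℝ :=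
  ∑ i ∈ s, ∑ j ∈ s, (W i j : ℝ) * (x i * x j)

theorem qf_insert {ι : Type*} (W : ι → ι → ℕ) (hsymm : ∀ i j, W i j = W j i)
    (hdiag : ∀ i, W i i = 0) (x : ι → ℝ) (s : Finset ι) (a : ι) (ha : a ∉ s) :
    qf W x (insert a s) = qf W x s + 2 * x a * ∑ j ∈ s, (W a j : ℝ) * x j := by
  unfold qf
  rw [sum_insert ha, sum_insert ha, hdiag]
  simp_rw [sum_insert ha]
  rw [sum_add_distrib, mul_sum]
  have : ∑ i ∈ s, (W i a : ℝ) * (x i * x a) = ∑ j ∈ s, x a * (W a j * x j) :=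
    sum_congr rfl fun i _ => by rw [hsymm i a]; ring
  rw [this]
  have : ∑ i ∈ s, (W a i : ℝ) * (x a * x i) = ∑ j ∈ s, x a * (W a j * x j) :=
    sum_congr rfl fun i _ => by ring
  rw [this]
  have : ∑ i ∈ s, 2 * x a * (W a i * x i) = 2 * ∑ j ∈ s, x a * (W a j * x j) := by
    rw [mul_sum]; exact sum_congr rfl fun i _ => by ring
  rw [this]
  push_cast
  ring

/-- If the weights in `s` are at most `c`, the form is at most that of the complete graph of
weight `c`. -/
theorem qf_le_of_le {ι : Type*} (W : ι → ι → ℕ)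
    (hdiag : ∀ i, W i i = 0) (x : ι → ℝ) (hx : ∀ i, 0 ≤ x i) (s : Finset ι) (c : ℕ)
    (hc : ∀ i ∈ s, ∀ j ∈ s, W i j ≤ c) :
    qf W x s ≤ c * ((∑ i ∈ s, x i) ^ 2 - ∑ i ∈ s, x i ^ 2) := by
  have : ∀ i ∈ s, ∑ j ∈ s, (W i j : ℝ) * (x i * x j) ≤ c * (x i * ∑ j ∈ s, x j) - c * x i ^ 2 := by
    intro i hi
    rw [← add_sum_erase s _ hi, ← add_sum_erase s x hi, hdiag]
    have : ∑ j ∈ s.erase i, (W i j : ℝ) * (x i * x j) ≤ ∑ j ∈ s.erase i, (c : ℝ) * (x i * x j) := by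
      refine sum_le_sum fun j hj => ?_
      have := hc i hi j (mem_of_mem_erase hj)
      exact mul_le_mul_of_nonneg_right (by exact_mod_cast this) (mul_nonneg (hx i) (hx j))
    rw [← mul_sum, ← mul_sum] at this
    push_cast
    nlinarith
  refine (sum_le_sum this).trans (le_of_eq ?_)
  rw [sum_sub_distrib, ← mul_sum, ← mul_sum, ← sum_mul]
  ring

/-- The constraints on the weights between clusters forced by the absence of a `K₁₂`. A condition
on a set `s` applies when the weights inside `s` are pairwise positive; `four`, `five` and `six`
concern sets of at least that many clusters. -/
structure Admissible {ι : Type*} (W : ι → ι → ℕ) : Prop where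
  symm : ∀ i j, W i j = W j i
  diag : ∀ i, W i i = 0
  le_five : ∀ i j, W i j ≤ 5
  three : ∀ s : Finset ι, (∀ i ∈ s, ∀ j ∈ s, i ≠ j → 1 ≤ W i j) →
    ∀ i ∈ s, ∀ j ∈ s, ∀ k ∈ s, i ≠ j → i ≠ k → j ≠ k → W i j + W i k + W j k ≤ 11
  four : ∀ s : Finset ι, (∀ i ∈ s, ∀ j ∈ s, i ≠ j → 1 ≤ W i j) → 4 ≤ #s →
    (∀ i ∈ s, ∀ j ∈ s, W i j ≤ 4) ∧
    ∀ i ∈ s, ∀ j ∈ s, ∀ k ∈ s, i ≠ j → i ≠ k → j ≠ k → W i j + W i k + W j k ≤ 10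
  five : ∀ s : Finset ι, (∀ i ∈ s, ∀ j ∈ s, i ≠ j → 1 ≤ W i j) → 5 ≤ #s →
    ∀ i ∈ s, ∀ j ∈ s, W i j ≤ 3
  six : ∀ s : Finset ι, (∀ i ∈ s, ∀ j ∈ s, i ≠ j → 1 ≤ W i j) → 6 ≤ #s →
    ∀ i ∈ s, ∀ j ∈ s, W i j ≤ 2

/-- The weighted Turán bound on a set of pairwise positive weights. The three-cluster and
four-cluster cases use `tri_form` and `quad_form`; in all others the uniform bound on the weights
and the Cauchy–Schwarz inequality suffice. -/
theorem qf_clique {ι : Type*} {W : ι → ι → ℕ} (h : Admissible W) (s : Finset ι)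
    (hs : ∀ i ∈ s, ∀ j ∈ s, i ≠ j → 1 ≤ W i j) (x : ι → ℝ) (hx : ∀ i, 0 ≤ x i) :
    19 * qf W x s ≤ 50 * (∑ i ∈ s, x i) ^ 2 := by
  have hsq : 0 ≤ ∑ i ∈ s, x i ^ 2 := sum_nonneg fun i _ => sq_nonneg _
  have hcs := sq_sum_le_card_mul_sum_sq (s := s) (f := x)
  have hS := sq_nonneg (∑ i ∈ s, x i)
  rcases Nat.lt_or_ge #s 6 with h6 | h6
  · interval_cases hc : #s
    · have := qf_le_of_le W h.diag x hx s 5 fun i _ j _ => h.le_five i j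
      push_cast at this hcs
      nlinarith
    · have := qf_le_of_le W h.diag x hx s 5 fun i _ j _ => h.le_five i j
      push_cast at this hcs
      nlinarith
    · have := qf_le_of_le W h.diag x hx s 5 fun i _ j _ => h.le_five i j
      push_cast at this hcs
      nlinarith
    · obtain ⟨a, b, c, hab, hac, hbc, rfl⟩ := card_eq_three.1 hc
      have h3 := h.three _ hs a (by simp) b (by simp) c (by simp) hab hac hbc
      have := tri_form (x a) (x b) (x c) (W a b) (W a c) (W b c) (hx a) (hx b) (hx c)
        (by exact_mod_cast h.le_five a b) (by exact_mod_cast h.le_five a c)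
        (by exact_mod_cast h.le_five b c) (by exact_mod_cast h3)
      rw [qf_insert W h.symm h.diag _ _ _ (by simp [hab, hac]),
        qf_insert W h.symm h.diag _ _ _ (by simp [hbc])]
      simp [sum_insert, hab, hac, hbc, qf, h.diag]
      nlinarith
    · obtain ⟨a, t, ha, rfl, ht⟩ := card_eq_succ.1 hc
      obtain ⟨b, c, d, hbc, hbd, hcd, rfl⟩ := card_eq_three.1 ht
      simp only [mem_insert, mem_singleton, not_or] at ha
      obtain ⟨hab, hac, had⟩ := ha
      obtain ⟨h4, h10⟩ := h.four _ hs hc.ge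
      have := quad_form (x a) (x b) (x c) (x d) (W a b) (W a c) (W a d) (W b c) (W b d) (W c d)
        (hx a) (hx b) (hx c) (hx d) (h4 a (by simp) b (by simp)) (h4 a (by simp) c (by simp))
        (h4 a (by simp) d (by simp)) (h4 b (by simp) c (by simp)) (h4 b (by simp) d (by simp))
        (h4 c (by simp) d (by simp))
        (h10 a (by simp) b (by simp) c (by simp) hab hac hbc)
        (h10 a (by simp) b (by simp) d (by simp) hab had hbd)
        (h10 a (by simp) c (by simp) d (by simp) hac had hcd)
        (h10 b (by simp) c (by simp) d (by simp) hbc hbd hcd)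
      rw [qf_insert W h.symm h.diag _ _ _ (by simp [hab, hac, had]),
        qf_insert W h.symm h.diag _ _ _ (by simp [hbc, hbd]),
        qf_insert W h.symm h.diag _ _ _ (by simp [hcd])]
      simp [sum_insert, hab, hac, had, hbc, hbd, hcd, qf, h.diag]
      nlinarith
    · have := qf_le_of_le W h.diag x hx s 3 (h.five s hs hc.ge)
      push_cast at this hcs
      nlinarith
  · have := qf_le_of_le W h.diag x hx s 2 (h.six s hs h6)
    push_cast at this
    nlinarith

/-- The weighted Turán bound, by Zykov symmetrization: two indices of mutual weight `0` can be
merged without decreasing the form, so the support shrinks to one of pairwise positive weights. -/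
theorem weighted_turan {ι : Type*} {W : ι → ι → ℕ} (h : Admissible W) (s : Finset ι)
    (x : ι → ℝ) (hx : ∀ i, 0 ≤ x i) :
    19 * qf W x s ≤ 50 * (∑ i ∈ s, x i) ^ 2 := by
  induction hn : #s using Nat.strong_induction_on generalizing s x with
  | _ n ih =>
  subst hn
  by_cases hs : ∀ i ∈ s, ∀ j ∈ s, i ≠ j → 1 ≤ W i j
  · exact qf_clique h s hs x hx
  push Not at hs
  obtain ⟨a, ha, b, hb, hab, hW⟩ := hs
  have hW0 : W a b = 0 := by omega
  obtain ⟨t, hta, htb, rfl⟩ : ∃ t : Finset ι, a ∉ t ∧ b ∉ t ∧ s = insert a (insert b t) := by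
    refine ⟨(s.erase a).erase b, by simp, by simp, ?_⟩
    rw [insert_erase (mem_erase.2 ⟨hab.symm, hb⟩), insert_erase ha]
  -- Moving the mass of `v` onto `u` is favourable when `u` has the larger weighted degree into `t`.
  have move : ∀ u v : ι, u ∉ t → v ∉ t → u ≠ v → W u v = 0 →
      ∑ j ∈ t, (W v j : ℝ) * x j ≤ ∑ j ∈ t, (W u j : ℝ) * x j →
      #(insert u t) < #(insert a (insert b t)) →
      19 * qf W x (insert u (insert v t)) ≤ 50 * (∑ i ∈ insert u (insert v t), x i) ^ 2 := by
    intro u v hu hv huv hw hle hcard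
    have := ih _ hcard (insert u t) (Function.update x u (x u + x v))
      (fun i => by
        by_cases hi : i = u
        · subst hi; simpa using add_nonneg (hx _) (hx _)
        · simpa [hi] using hx i) rfl
    have e : ∀ j ∈ t, Function.update x u (x u + x v) j = x j := fun j hj =>
      Function.update_of_ne (fun h' : j = u => hu (h' ▸ hj)) _ _
    have e1 : qf W (Function.update x u (x u + x v)) t = qf W x t :=
      sum_congr rfl fun i hi => sum_congr rfl fun j hj => by rw [e i hi, e j hj]
    have e2 : ∑ j ∈ t, (W u j : ℝ) * Function.update x u (x u + x v) j
        = ∑ j ∈ t, (W u j : ℝ) * x j := sum_congr rfl fun j hj => by rw [e j hj]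
    rw [qf_insert W h.symm h.diag _ _ _ hu, e1, e2, sum_insert hu, sum_congr rfl e,
      Function.update_self] at this
    have hu' : u ∉ insert v t := by simp [huv, hu]
    rw [qf_insert W h.symm h.diag _ _ _ hu', qf_insert W h.symm h.diag _ _ _ hv, sum_insert hu',
      sum_insert hv, sum_insert hv, hw]
    push_cast
    have := mul_le_mul_of_nonneg_left hle (hx v)
    nlinarith
  have ha' : a ∉ insert b t := by simp [hab, hta]
  rcases le_total (∑ j ∈ t, (W b j : ℝ) * x j) (∑ j ∈ t, (W a j : ℝ) * x j) with hle | hle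
  · refine move a b hta htb hab hW0 hle ?_
    rw [card_insert_of_notMem hta, card_insert_of_notMem ha', card_insert_of_notMem htb]
    omega
  · rw [insert_comm]
    refine move b a htb hta hab.symm (by rw [h.symm, hW0]) hle ?_
    rw [card_insert_of_notMem ha']
    omega

/-! ### Typical vertices -/

/-- Every pair of subsets of `A` and `B` of size at least `m` has edge density at least `c`. -/
def LowerDense {α : Type*} (G : SimpleGraph α) (A B : Finset α) (c m : ℝ) : Prop :=
  ∀ A' ⊆ A, ∀ B' ⊆ B, m ≤ #A' → m ≤ #B' → c * #A' * #B' ≤ #(G.interedges A' B')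

theorem card_interedges_eq_sum {α : Type*} (G : SimpleGraph α) (A B : Finset α) :
    #(G.interedges A B) = ∑ v ∈ A, #{u ∈ B | G.Adj v u} := by
  rw [SimpleGraph.interedges_def, card_filter, sum_product]
  simp_rw [card_filter]

/-- Fewer than `m` vertices of `A'` have density below `c` towards a large subset `B'` of `B`. -/
theorem card_atypical_lt {α : Type*} {G : SimpleGraph α} {A B A' B' : Finset α} {c m : ℝ}
    (h : LowerDense G A B c m) (hm : 0 < m) (hA : A' ⊆ A) (hB : B' ⊆ B) (hB' : m ≤ #B') :
    (#{v ∈ A' | (#{u ∈ B' | G.Adj v u} : ℝ) < c * #B'} : ℝ) < m := by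
  by_contra! hcon
  have h1 := h _ ((filter_subset _ A').trans hA) _ hB hcon hB'
  rw [card_interedges_eq_sum] at h1
  push_cast at h1
  set D := {v ∈ A' | (#{u ∈ B' | G.Adj v u} : ℝ) < c * #B'} with hD
  have hne : D.Nonempty := by
    rw [← card_pos]
    exact_mod_cast hm.trans_le hcon
  have h2 : ∑ v ∈ D, (#{u ∈ B' | G.Adj v u} : ℝ) < ∑ v ∈ D, c * #B' :=
    sum_lt_sum_of_nonempty hne fun v hv => (mem_filter.1 hv).2
  rw [sum_const, nsmul_eq_mul] at h2
  linarith

/-- All but `#s * m` vertices of `A'` have density at least `c j` towards every one of the sets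
`B j` simultaneously. -/
theorem card_typical_ge {α ι : Type*} {G : SimpleGraph α} (s : Finset ι) {A A' : Finset α}
    {V B : ι → Finset α} {c : ι → ℝ} {m : ℝ} (hm : 0 < m)
    (h : ∀ j ∈ s, LowerDense G A (V j) (c j) m) (hA : A' ⊆ A) (hB : ∀ j ∈ s, B j ⊆ V j)
    (hB' : ∀ j ∈ s, m ≤ #(B j)) :
    (#A' : ℝ) - #s * m ≤ #{v ∈ A' | ∀ j ∈ s, c j * #(B j) ≤ #{u ∈ B j | G.Adj v u}} := by
  have hsub : A' ⊆ {v ∈ A' | ∀ j ∈ s, c j * #(B j) ≤ #{u ∈ B j | G.Adj v u}} ∪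
      s.biUnion fun j => {v ∈ A' | (#{u ∈ B j | G.Adj v u} : ℝ) < c j * #(B j)} := by
    intro v hv
    by_cases hv' : ∀ j ∈ s, c j * #(B j) ≤ #{u ∈ B j | G.Adj v u}
    · exact mem_union_left _ (mem_filter.2 ⟨hv, hv'⟩)
    · push Not at hv'
      obtain ⟨j, hj, hlt⟩ := hv'
      exact mem_union_right _ (mem_biUnion.2 ⟨j, hj, mem_filter.2 ⟨hv, hlt⟩⟩)
  have h1 : (#A' : ℝ) ≤ #{v ∈ A' | ∀ j ∈ s, c j * #(B j) ≤ #{u ∈ B j | G.Adj v u}} +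
      ∑ j ∈ s, (#{v ∈ A' | (#{u ∈ B j | G.Adj v u} : ℝ) < c j * #(B j)} : ℝ) := by
    exact_mod_cast (card_le_card hsub).trans ((card_union_le _ _).trans
      (Nat.add_le_add_left card_biUnion_le _))
  have h2 : ∑ j ∈ s, (#{v ∈ A' | (#{u ∈ B j | G.Adj v u} : ℝ) < c j * #(B j)} : ℝ) ≤
      ∑ j ∈ s, m :=
    sum_le_sum fun j hj => (card_atypical_lt (h j hj) hm hA (hB j hj) (hB' j hj)).le
  rw [sum_const, nsmul_eq_mul] at h2
  linarith

/-- If all vertices of a five-set `K` have density above `(w - 1) / 5` towards `B`, then some `w`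
vertices of `K` have many common neighbours in `B`: by double counting an `η`-fraction of `B`
sees at least `w` vertices of `K`, and a pigeonhole over the at most `31` nonempty subsets of `K`
concludes. -/
theorem exists_common_subset {α : Type*} {G : SimpleGraph α} {K B : Finset α} {w : ℕ} {η : ℝ}
    (hK : #K = 5) (hw : 1 ≤ w) (hw5 : w ≤ 5) (hη : 0 < η)
    (h : ∀ v ∈ K, (((w : ℝ) - 1) / 5 + η) * #B ≤ #{u ∈ B | G.Adj v u}) :
    ∃ T ⊆ K, w ≤ #T ∧ η / 32 * #B ≤ #{u ∈ B | ∀ v ∈ T, G.Adj v u} := by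
  let N : α → Finset α := fun u => {v ∈ K | G.Adj v u}
  have h1 : (((w : ℝ) - 1) + 5 * η) * #B ≤ ∑ u ∈ B, (#(N u) : ℝ) := by
    have e : ∑ u ∈ B, (#(N u) : ℝ) = ∑ v ∈ K, (#{u ∈ B | G.Adj v u} : ℝ) := by
      simp only [N, card_filter]
      push_cast
      exact sum_comm
    rw [e]
    have := sum_le_sum h
    rw [sum_const, hK, nsmul_eq_mul] at this
    push_cast at this
    linarith
  have h2 : ∑ u ∈ B, (#(N u) : ℝ) ≤ (w - 1) * #B + 5 * #{u ∈ B | w ≤ #(N u)} := by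
    have : ∀ u ∈ B, (#(N u) : ℝ) ≤ (w - 1) + 5 * (if w ≤ #(N u) then 1 else 0) := by
      intro u _
      have h5 : #(N u) ≤ 5 := hK ▸ card_le_card (filter_subset _ _)
      have hw' : (1 : ℝ) ≤ w := by exact_mod_cast hw
      split_ifs with hu
      · have : (#(N u) : ℝ) ≤ 5 := by exact_mod_cast h5
        linarith
      · have : (#(N u) : ℝ) + 1 ≤ w := by exact_mod_cast (not_le.1 hu)
        linarith
    refine (sum_le_sum this).trans (le_of_eq ?_)
    rw [sum_add_distrib, sum_const, ← mul_sum, card_filter, nsmul_eq_mul]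
    push_cast
    ring
  have h3 : η * #B ≤ #{u ∈ B | w ≤ #(N u)} := by linarith
  by_contra! hcon
  have h4 : #{u ∈ B | w ≤ #(N u)} ≤
      ∑ T ∈ {T ∈ K.powerset | w ≤ #T}, #{u ∈ B | ∀ v ∈ T, G.Adj v u} := by
    refine (card_le_card ?_).trans card_biUnion_le
    intro u hu
    obtain ⟨hu, hwu⟩ := mem_filter.1 hu
    refine mem_biUnion.2 ⟨N u, ?_, ?_⟩
    · exact mem_filter.2 ⟨mem_powerset.2 (filter_subset _ _), hwu⟩
    · exact mem_filter.2 ⟨hu, fun v hv => (mem_filter.1 hv).2⟩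
  have h5 : (∑ T ∈ {T ∈ K.powerset | w ≤ #T}, (#{u ∈ B | ∀ v ∈ T, G.Adj v u} : ℝ)) ≤
      ∑ T ∈ {T ∈ K.powerset | w ≤ #T}, η / 32 * #B :=
    sum_le_sum fun T hT => by
      obtain ⟨hT, hTw⟩ := mem_filter.1 hT
      exact (hcon T (mem_powerset.1 hT) hTw).le
  have h6 : #{T ∈ K.powerset | w ≤ #T} ≤ 31 := by
    have : {T ∈ K.powerset | w ≤ #T} ⊆ K.powerset.erase ∅ := by
      intro T hT
      obtain ⟨hT, hTw⟩ := mem_filter.1 hT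
      refine mem_erase.2 ⟨?_, hT⟩
      rintro rfl
      simp at hTw
      omega
    have := card_le_card this
    rw [card_erase_of_mem (by simp), card_powerset, hK] at this
    simpa using this
  have h4' : (#{u ∈ B | w ≤ #(N u)} : ℝ) ≤
      ∑ T ∈ {T ∈ K.powerset | w ≤ #T}, (#{u ∈ B | ∀ v ∈ T, G.Adj v u} : ℝ) := by
    exact_mod_cast h4
  rw [sum_const, nsmul_eq_mul] at h5
  have h6' : (#{T ∈ K.powerset | w ≤ #T} : ℝ) ≤ 31 := by exact_mod_cast h6
  have hB0 : 0 ≤ η / 32 * #B := by positivity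
  have h7 := mul_le_mul_of_nonneg_right h6' hB0
  have hB : η * #B ≤ 0 := by linarith
  have hB1 : (#B : ℝ) = 0 := by
    have : (0 : ℝ) ≤ #B := by positivity
    nlinarith
  -- An empty `B` contradicts the strict inequality `hcon` for `T = K`.
  have := hcon K subset_rfl (by omega)
  rw [hB1] at this
  have h0 : (0 : ℝ) ≤ #{u ∈ B | ∀ v ∈ K, G.Adj v u} := by positivity
  linarith

theorem isNClique_union {α : Type*} {G : SimpleGraph α} {a b : ℕ} {s t : Finset α}
    (hs : G.IsNClique a s) (ht : G.IsNClique b t) (h : ∀ u ∈ s, ∀ v ∈ t, G.Adj u v) :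
    G.IsNClique (a + b) (s ∪ t) := by
  have hd : Disjoint s t := disjoint_left.2 fun x hx hx' => G.irrefl (h x hx x hx')
  refine ⟨?_, by rw [card_union_of_disjoint hd, hs.2, ht.2]⟩
  rw [coe_union]
  intro x hx y hy hxy
  rcases hx with hx | hx <;> rcases hy with hy | hy
  · exact hs.1 hx hy hxy
  · exact h x hx y hy
  · exact (h y hy x hx).symm
  · exact ht.1 hx hy hxy

/-! ### Embedding cliques into clusters -/

/-- The properties of a regularity partition used for embedding cliques: `V i` are the clusters,
a pair of weight `W i j ≥ 1` is lower-dense with density exceeding `(W i j - 1) / 5` by `η`, sets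
of more than `m` vertices contain a `K₅`, and every cluster lying in a pair of positive weight is
large enough to be shrunk by the factor `η / 32` up to six times. -/
structure Reduced {α ι : Type*} (G : SimpleGraph α) (V : ι → Finset α) (W : ι → ι → ℕ)
    (η m : ℝ) : Prop where
  m_pos : 0 < m
  η_pos : 0 < η
  η_le : η ≤ 1
  symm : ∀ i j, W i j = W j i
  diag : ∀ i, W i i = 0
  le_five : ∀ i j, W i j ≤ 5
  dense : ∀ i j, 1 ≤ W i j → LowerDense G (V i) (V j) (((W i j : ℝ) - 1) / 5 + η) m
  clique : ∀ A : Finset α, m < #A → ∃ K ⊆ A, G.IsNClique 5 K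
  large : ∀ i j, 1 ≤ W i j → 7 * m * (32 / η) ^ 6 ≤ #(V i)

/-- Whenever each cluster `V j`, `j ∈ s`, is replaced by a subset of size at least `M`, the union
of these subsets contains a clique on `k` vertices. The clusters need not be disjoint. -/
def Emb {α ι : Type*} (G : SimpleGraph α) (V : ι → Finset α) (s : Finset ι) (M : ℝ) (k : ℕ) :
    Prop :=
  ∀ A : ι → Finset α, (∀ j ∈ s, A j ⊆ V j ∧ M ≤ #(A j)) →
    ∃ t ⊆ s.biUnion A, G.IsNClique k t

section
variable {α ι : Type*} {G : SimpleGraph α} {V : ι → Finset α} {W : ι → ι → ℕ} {η m : ℝ}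

/-- A new cluster of positive weight to all clusters of `s` contributes one vertex: choose a vertex
that is typical towards all the current subsets and pass to its neighbourhoods. -/
theorem Reduced.emb_insert_one (h : Reduced G V W η m) {s : Finset ι} {i : ι}
    (hs : #s ≤ 5) (hW : ∀ j ∈ s, 1 ≤ W i j) {M : ℝ} (hM : 7 * m ≤ M) {k : ℕ}
    (he : Emb G V s M k) : Emb G V (insert i s) (M * (32 / η)) (k + 1) := by
  intro A hA
  have hη := h.η_pos
  have hm := h.m_pos
  have hR : 32 ≤ 32 / η := by rw [le_div_iff₀ hη]; nlinarith [h.η_le]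
  have hMR : M ≤ M * (32 / η) := by nlinarith
  have hη' : M = η / 32 * (M * (32 / η)) := by field_simp
  have hAs : ∀ j ∈ s, A j ⊆ V j ∧ M * (32 / η) ≤ #(A j) := fun j hj => hA j (mem_insert_of_mem hj)
  obtain ⟨hAi, hAi'⟩ := hA i (mem_insert_self _ _)
  have typ := card_typical_ge s hm (fun j hj => h.dense i j (hW j hj)) hAi
    (fun j hj => (hAs j hj).1) (fun j hj => by linarith [(hAs j hj).2])
  have hs' : (#s : ℝ) ≤ 5 := by exact_mod_cast hs
  have hpos : (0 : ℝ) < #{v ∈ A i | ∀ j ∈ s, (((W i j : ℝ) - 1) / 5 + η) * #(A j) ≤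
      #{u ∈ A j | G.Adj v u}} := by nlinarith
  obtain ⟨v, hv⟩ := card_pos.1 (Nat.cast_pos.1 hpos)
  obtain ⟨hvA, hv⟩ := mem_filter.1 hv
  obtain ⟨t, hts, ht⟩ := he (fun j => {u ∈ A j | G.Adj v u}) fun j hj => by
    refine ⟨(filter_subset _ _).trans (hAs j hj).1, le_trans ?_ (hv j hj)⟩
    have h1 : (1 : ℝ) ≤ W i j := by exact_mod_cast hW j hj
    have h2 := (hAs j hj).2
    have h3 : (0 : ℝ) ≤ #(A j) := Nat.cast_nonneg _
    have h4 := mul_le_mul_of_nonneg_left h2 hη.le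
    have h5 := mul_nonneg (sub_nonneg.2 h1) h3
    linarith [h.m_pos]
  refine ⟨t ∪ {v}, ?_, isNClique_union ht (by simp) ?_⟩
  · refine union_subset (fun u hu => ?_) (by simpa using Or.inl hvA)
    obtain ⟨j, hj, hu⟩ := mem_biUnion.1 (hts hu)
    exact mem_biUnion.2 ⟨j, mem_insert_of_mem hj, (mem_filter.1 hu).1⟩
  · intro u hu v' hv'
    obtain rfl := mem_singleton.1 hv'
    obtain ⟨j, hj, hu⟩ := mem_biUnion.1 (hts hu)
    exact (mem_filter.1 hu).2.symm

/-- A new cluster contributes `q` vertices when `q ≤ 5 - ∑ (5 - W i j)`: a `K₅` of typical vertices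
has, for each `j ∈ s`, a subset `T j` of at least `W i j` vertices with many common neighbours in
the `j`-th set, and the sets `T j` have at least `q` vertices in common. -/
theorem Reduced.emb_insert (h : Reduced G V W η m) {s : Finset ι} {i : ι}
    (hs : #s ≤ 5) (hW : ∀ j ∈ s, 1 ≤ W i j) {M : ℝ} (hM : 7 * m ≤ M) {k q : ℕ}
    (hq : q + ∑ j ∈ s, (5 - W i j) ≤ 5)
    (he : Emb G V s M k) : Emb G V (insert i s) (M * (32 / η)) (k + q) := by
  intro A hA
  have hη := h.η_pos
  have hm := h.m_pos
  have hR : 32 ≤ 32 / η := by rw [le_div_iff₀ hη]; nlinarith [h.η_le]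
  have hMR : M ≤ M * (32 / η) := by nlinarith
  have hη' : M = η / 32 * (M * (32 / η)) := by field_simp
  have hAs : ∀ j ∈ s, A j ⊆ V j ∧ M * (32 / η) ≤ #(A j) := fun j hj => hA j (mem_insert_of_mem hj)
  obtain ⟨hAi, hAi'⟩ := hA i (mem_insert_self _ _)
  have typ := card_typical_ge s hm (fun j hj => h.dense i j (hW j hj)) hAi
    (fun j hj => (hAs j hj).1) (fun j hj => by linarith [(hAs j hj).2])
  have hs' : (#s : ℝ) ≤ 5 := by exact_mod_cast hs
  obtain ⟨K, hKs, hK⟩ := h.clique {v ∈ A i | ∀ j ∈ s, (((W i j : ℝ) - 1) / 5 + η) * #(A j) ≤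
      #{u ∈ A j | G.Adj v u}} (by nlinarith)
  have hT : ∀ j : ι, ∃ T ⊆ K, j ∈ s → W i j ≤ #T ∧
      η / 32 * #(A j) ≤ #{u ∈ A j | ∀ v ∈ T, G.Adj v u} := by
    intro j
    by_cases hj : j ∈ s
    · obtain ⟨T, hTK, hT⟩ := exists_common_subset hK.2 (hW j hj) (h.le_five i j) hη
        fun v hv => (mem_filter.1 (hKs hv)).2 j hj
      exact ⟨T, hTK, fun _ => hT⟩
    · exact ⟨∅, empty_subset _, fun h => absurd h hj⟩
  choose T hTK hT using hT
  let S := {v ∈ K | ∀ j ∈ s, v ∈ T j}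
  have hS : q ≤ #S := by
    have hsub : K ⊆ S ∪ s.biUnion fun j => K \ T j := by
      intro v hv
      by_cases hv' : ∀ j ∈ s, v ∈ T j
      · exact mem_union_left _ (mem_filter.2 ⟨hv, hv'⟩)
      · push Not at hv'
        obtain ⟨j, hj, hvj⟩ := hv'
        exact mem_union_right _ (mem_biUnion.2 ⟨j, hj, mem_sdiff.2 ⟨hv, hvj⟩⟩)
    have h1 := (card_le_card hsub).trans ((card_union_le _ _).trans
      (Nat.add_le_add_left card_biUnion_le _))
    have h2 : ∑ j ∈ s, #(K \ T j) ≤ ∑ j ∈ s, (5 - W i j) := sum_le_sum fun j hj => by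
      rw [card_sdiff_of_subset (hTK j), hK.2]
      have := (hT j hj).1
      omega
    rw [hK.2] at h1
    omega
  obtain ⟨Q, hQS, hQ⟩ := exists_subset_card_eq hS
  have hQK : Q ⊆ K := hQS.trans (filter_subset _ _)
  obtain ⟨t, hts, ht⟩ := he (fun j => {u ∈ A j | ∀ v ∈ T j, G.Adj v u}) fun j hj => by
    refine ⟨(filter_subset _ _).trans (hAs j hj).1, le_trans ?_ (hT j hj).2⟩
    rw [hη']
    exact mul_le_mul_of_nonneg_left (hAs j hj).2 (by positivity)
  refine ⟨t ∪ Q, ?_, isNClique_union ht ⟨hK.1.subset (by exact_mod_cast hQK), hQ⟩ ?_⟩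
  · refine union_subset (fun u hu => ?_) fun v hv => ?_
    · obtain ⟨j, hj, hu⟩ := mem_biUnion.1 (hts hu)
      exact mem_biUnion.2 ⟨j, mem_insert_of_mem hj, (mem_filter.1 hu).1⟩
    · exact mem_biUnion.2 ⟨i, mem_insert_self _ _, (mem_filter.1 (hKs (hQK hv))).1⟩
  · intro u hu v hv
    obtain ⟨j, hj, hu⟩ := mem_biUnion.1 (hts hu)
    exact ((mem_filter.1 hu).2 v ((mem_filter.1 (hQS hv)).2 j hj)).symm

/-- `Emb` with the size threshold `7 m (32 / η) ^ #s`, which leaves room for one shrinking step by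
`η / 32` per cluster, the sets never dropping below `7 m` vertices. -/
def EmbN (G : SimpleGraph α) (V : ι → Finset α) (η m : ℝ) (s : Finset ι) (k : ℕ) : Prop :=
  Emb G V s (7 * m * (32 / η) ^ #s) k

theorem Reduced.threshold_le (h : Reduced G V W η m) (a : ℕ) : 7 * m ≤ 7 * m * (32 / η) ^ a := by
  have hR : 1 ≤ 32 / η := by rw [le_div_iff₀ h.η_pos]; nlinarith [h.η_le]
  have := one_le_pow₀ hR (n := a)
  nlinarith [h.m_pos]

theorem Reduced.embN_insert_one (h : Reduced G V W η m) {s : Finset ι} {i : ι} (hi : i ∉ s)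
    (hs : #s ≤ 5) (hW : ∀ j ∈ s, 1 ≤ W i j) {k : ℕ} (he : EmbN G V η m s k) :
    EmbN G V η m (insert i s) (k + 1) := by
  have := h.emb_insert_one hs hW (h.threshold_le _) he
  rwa [mul_assoc, ← pow_succ, ← card_insert_of_notMem hi] at this

theorem Reduced.embN_insert (h : Reduced G V W η m) {s : Finset ι} {i : ι} (hi : i ∉ s)
    (hs : #s ≤ 5) (hW : ∀ j ∈ s, 1 ≤ W i j) {k q : ℕ}
    (hq : q + ∑ j ∈ s, (5 - W i j) ≤ 5) (he : EmbN G V η m s k) :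
    EmbN G V η m (insert i s) (k + q) := by
  have := h.emb_insert hs hW (h.threshold_le _) hq he
  rwa [mul_assoc, ← pow_succ, ← card_insert_of_notMem hi] at this

/-- A cluster carries a `K₅`, and a second one adds `W i j` vertices to it. -/
theorem Reduced.embN_pair (h : Reduced G V W η m) {i j : ι} (hij : 1 ≤ W i j) :
    EmbN G V η m {i, j} (5 + W i j) := by
  have hne : i ≠ j := by rintro rfl; rw [h.diag] at hij; omega
  have h0 : EmbN G V η m ∅ 0 := fun A _ => ⟨∅, by simp, by simp⟩
  have h1 : EmbN G V η m {j} 5 := by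
    simpa using h.embN_insert (i := j) (q := 5) (by simp) (by simp) (by simp) (by simp) h0
  have := h.le_five i j
  exact h.embN_insert (by simpa using hne) (by simp) (by simpa using hij)
    (by rw [sum_singleton]; omega) h1

/-- Inserting `i` in front of the pair `j, k` adds `W i j + W i k - 5` vertices to the
`5 + W j k` of the pair; `h5` keeps the subtraction honest. -/
theorem Reduced.embN_triple (h : Reduced G V W η m) {i j k : ι} (hij : 1 ≤ W i j)
    (hik : 1 ≤ W i k) (hjk : 1 ≤ W j k) (h5 : 5 ≤ W i j + W i k) :
    EmbN G V η m {i, j, k} (W i j + W i k + W j k) := by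
  have h1 : i ≠ j := by rintro rfl; rw [h.diag] at hij; omega
  have h2 : i ≠ k := by rintro rfl; rw [h.diag] at hik; omega
  have h3 : j ≠ k := by rintro rfl; rw [h.diag] at hjk; omega
  have := h.le_five i j
  have := h.le_five i k
  have := h.embN_insert (i := i) (q := W i j + W i k - 5) (by simp [h1, h2])
    (by rw [card_pair h3]; omega) (by simp [hij, hik])
    (by rw [sum_pair h3]; omega) (h.embN_pair hjk)
  rwa [show 5 + W j k + (W i j + W i k - 5) = W i j + W i k + W j k by omega] at this

/-- Each further cluster adds at least one vertex to the clique. -/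
theorem Reduced.embN_superset (h : Reduced G V W η m) {u : Finset ι} (hu : #u ≤ 6)
    (hpos : ∀ i ∈ u, ∀ j ∈ u, i ≠ j → 1 ≤ W i j) {s : Finset ι} (hsu : s ⊆ u) {k : ℕ}
    (he : EmbN G V η m s k) : EmbN G V η m u (k + (#u - #s)) := by
  induction hn : #u - #s generalizing s k with
  | zero =>
    rw [eq_of_subset_of_card_le hsu (by omega)] at he
    exact he
  | succ n ih =>
    obtain ⟨i, hiu, his⟩ := exists_mem_notMem_of_card_lt_card (by omega : #s < #u)
    have hc := card_insert_of_notMem his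
    have := ih (insert_subset hiu hsu)
      (h.embN_insert_one his (by omega) (fun j hj => hpos i hiu j (hsu hj)
        (by rintro rfl; exact his hj)) he) (by omega)
    rwa [show k + 1 + n = k + (n + 1) by omega] at this

/-- Cliques embedded in at least two clusters of pairwise positive weights are cliques of `G`. Two
clusters are needed because only clusters in a pair of positive weight are known to be large. -/
theorem Reduced.card_lt (h : Reduced G V W η m) (hG : G.CliqueFree 12) {u : Finset ι}
    (hu : #u ≤ 6) (hu2 : 2 ≤ #u) (hpos : ∀ i ∈ u, ∀ j ∈ u, i ≠ j → 1 ≤ W i j) {k : ℕ}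
    (he : EmbN G V η m u k) : k < 12 := by
  by_contra! hk
  obtain ⟨t, _, ht⟩ := he V fun i hi => by
    obtain ⟨j, hj, hji⟩ := exists_mem_ne (by omega : 1 < #u) i
    refine ⟨subset_rfl, le_trans ?_ (h.large i j (hpos i hi j hj hji.symm))⟩
    have hR : 1 ≤ 32 / η := by rw [le_div_iff₀ h.η_pos]; nlinarith [h.η_le]
    have := pow_le_pow_right₀ hR hu
    nlinarith [h.m_pos]
  exact (hG.mono hk) t ht

/-- A set of at least `r` clusters carries a clique on `5 + W i j + (r - 2)` vertices, which is at
most `11`. -/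
theorem Reduced.pair_bound (h : Reduced G V W η m) (hG : G.CliqueFree 12) {s : Finset ι}
    (hpos : ∀ i ∈ s, ∀ j ∈ s, i ≠ j → 1 ≤ W i j) (r : ℕ) (hr : 2 ≤ r) (hr6 : r ≤ 6)
    (hrs : r ≤ #s) : ∀ i ∈ s, ∀ j ∈ s, W i j + r ≤ 8 := by
  intro i hi j hj
  by_cases hij : i = j
  · subst hij; rw [h.diag]; omega
  obtain ⟨u, hiu, hus, huc⟩ := exists_subsuperset_card_eq
    (insert_subset hi (singleton_subset_iff.2 hj)) (by rw [card_pair hij]; exact hr) hrs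
  have hpu : ∀ i ∈ u, ∀ j ∈ u, i ≠ j → 1 ≤ W i j := fun i hi j hj => hpos i (hus hi) j (hus hj)
  have := h.card_lt hG (by omega) (by omega) hpu
    (h.embN_superset (by omega) hpu hiu (h.embN_pair (hpos i hi j hj hij)))
  rw [card_pair hij] at this
  omega

/-- A set of at least `r` clusters carries a clique on `W i j + W i k + W j k + (r - 3)` vertices,
which is at most `11`. -/
theorem Reduced.triple_bound (h : Reduced G V W η m) (hG : G.CliqueFree 12) {s : Finset ι}
    (hpos : ∀ i ∈ s, ∀ j ∈ s, i ≠ j → 1 ≤ W i j) (r : ℕ) (hr : 3 ≤ r) (hr6 : r ≤ 4)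
    (hrs : r ≤ #s) : ∀ i ∈ s, ∀ j ∈ s, ∀ k ∈ s, i ≠ j → i ≠ k → j ≠ k →
      W i j + W i k + W j k + r ≤ 14 := by
  intro i hi j hj k hk hij hik hjk
  by_contra! hcon
  have hc : #{i, j, k} = 3 := card_eq_three.2 ⟨i, j, k, hij, hik, hjk, rfl⟩
  obtain ⟨u, hiu, hus, huc⟩ := exists_subsuperset_card_eq
    (insert_subset hi (insert_subset hj (singleton_subset_iff.2 hk))) (by rw [hc]; exact hr) hrs
  have hpu : ∀ i ∈ u, ∀ j ∈ u, i ≠ j → 1 ≤ W i j := fun i hi j hj => hpos i (hus hi) j (hus hj)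
  have := h.le_five j k
  have := h.card_lt hG (by omega) (by omega) hpu
    (h.embN_superset (by omega) hpu hiu (h.embN_triple (hpos i hi j hj hij) (hpos i hi k hk hik)
      (hpos j hj k hk hjk) (by omega)))
  rw [hc] at this
  omega

/-- The weights of a reduced graph of a `K₁₂`-free graph are admissible. -/
theorem Reduced.admissible (h : Reduced G V W η m) (hG : G.CliqueFree 12) : Admissible W where
  symm := h.symm
  diag := h.diag
  le_five := h.le_five
  three s hs i hi j hj k hk hij hik hjk := by
    have := h.triple_bound hG (s := {i, j, k}) (fun a ha b hb => hs a (by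
      simp at ha; rcases ha with rfl | rfl | rfl <;> assumption) b (by
      simp at hb; rcases hb with rfl | rfl | rfl <;> assumption)) 3 le_rfl (by norm_num)
      (card_eq_three.2 ⟨i, j, k, hij, hik, hjk, rfl⟩).ge i (by simp) j (by simp) k (by simp)
      hij hik hjk
    omega
  four s hs hc := by
    refine ⟨fun i hi j hj => ?_, fun i hi j hj k hk hij hik hjk => ?_⟩
    · have := h.pair_bound hG hs 4 (by norm_num) (by norm_num) hc i hi j hj
      omega
    · have := h.triple_bound hG hs 4 (by norm_num) le_rfl hc i hi j hj k hk hij hik hjk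
      omega
  five s hs hc i hi j hj := by
    have := h.pair_bound hG hs 5 (by norm_num) (by norm_num) hc i hi j hj
    omega
  six s hs hc i hi j hj := by
    have := h.pair_bound hG hs 6 (by norm_num) le_rfl hc i hi j hj
    omega
end

/-! ### Regularity and counting -/

theorem two_mul_edgeCount {α : Type} [Fintype α] (G : SimpleGraph α) :
    2 * edgeCount G = #(G.interedges univ univ) := by
  have : edgeCount G = #G.edgeFinset := by
    rw [edgeCount, ← SimpleGraph.coe_edgeFinset, Set.ncard_coe_finset]
  rw [this, SimpleGraph.two_mul_card_edgeFinset, SimpleGraph.interedges_def, univ_product_univ]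

theorem exists_clique_of_alphaP_lt {α : Type} [Fintype α] {p : ℕ} {G : SimpleGraph α}
    {A : Finset α} (h : alphaP p G < #A) : ∃ K ⊆ A, G.IsNClique p K := by
  by_contra! hcon
  refine h.not_ge (le_csSup ⟨Fintype.card α, ?_⟩ ⟨A, rfl, hcon⟩)
  rintro k ⟨s, rfl, _⟩
  exact card_le_univ s

/-- The weight `⌈5 (d - 2η)⌉₊` of an `ε`-uniform pair of distinct parts of `P` with density `d`,
and `0` for all other pairs. The shift by `2η` absorbs the error `ε ≤ η` of uniformity and leaves
the surplus `η` required in `Reduced`. -/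
noncomputable def pairWeight {α : Type} [Fintype α] (G : SimpleGraph α)
    (P : Finpartition (univ : Finset α)) (ε η : ℝ) (A B : Finset α) : ℕ :=
  if A ∈ P.parts ∧ B ∈ P.parts ∧ A ≠ B ∧ G.IsUniform ε A B then
    ⌈5 * ((G.edgeDensity A B : ℝ) - 2 * η)⌉₊ else 0

theorem card_interedges_eq {α : Type} (G : SimpleGraph α) (A B : Finset α) :
    (#(G.interedges A B) : ℝ) = G.edgeDensity A B * (#A * #B) := by
  rw [SimpleGraph.edgeDensity_def]
  push_cast
  rcases A.eq_empty_or_nonempty with rfl | hA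
  · simp
  rcases B.eq_empty_or_nonempty with rfl | hB
  · simp [SimpleGraph.interedges_def]
  have := hA.card_pos
  have := hB.card_pos
  field_simp

section
variable {α : Type} [Fintype α] {G : SimpleGraph α} {P : Finpartition (univ : Finset α)} {ε η m : ℝ}

/-- A positive weight certifies uniformity and a density above `(W - 1) / 5 + 2η`. -/
theorem pairWeight_spec {A B : Finset α} (h : 1 ≤ pairWeight G P ε η A B) :
    A ∈ P.parts ∧ B ∈ P.parts ∧ A ≠ B ∧ G.IsUniform ε A B ∧
      ((pairWeight G P ε η A B : ℝ) - 1) / 5 + 2 * η < G.edgeDensity A B := by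
  by_cases hc : A ∈ P.parts ∧ B ∈ P.parts ∧ A ≠ B ∧ G.IsUniform ε A B
  · refine ⟨hc.1, hc.2.1, hc.2.2.1, hc.2.2.2, ?_⟩
    have hw : pairWeight G P ε η A B = ⌈5 * ((G.edgeDensity A B : ℝ) - 2 * η)⌉₊ := if_pos hc
    have : pairWeight G P ε η A B - 1 < ⌈5 * ((G.edgeDensity A B : ℝ) - 2 * η)⌉₊ := by omega
    rw [Nat.lt_ceil, Nat.cast_sub h] at this
    push_cast at this
    linarith
  · rw [pairWeight, if_neg hc] at h
    omega

/-- A regularity partition into parts that are large compared with `α₅(G)` satisfies the embedding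
hypotheses. -/
theorem reduced_of_uniform (hη : 0 < η) (hη1 : η ≤ 1) (hεη : ε ≤ η) (hm : 0 < m)
    (hα : (alphaP 5 G : ℝ) ≤ m) (hup : ∀ A ∈ P.parts, #A * ε ≤ m)
    (hlow : ∀ A ∈ P.parts, 7 * m * (32 / η) ^ 6 ≤ #A) :
    Reduced G (fun A : Finset α => A) (pairWeight G P ε η) η m where
  m_pos := hm
  η_pos := hη
  η_le := hη1
  symm A B := by
    have hiff : (A ∈ P.parts ∧ B ∈ P.parts ∧ A ≠ B ∧ G.IsUniform ε A B) ↔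
        (B ∈ P.parts ∧ A ∈ P.parts ∧ B ≠ A ∧ G.IsUniform ε B A) :=
      ⟨fun h => ⟨h.2.1, h.1, h.2.2.1.symm, h.2.2.2.symm⟩,
        fun h => ⟨h.2.1, h.1, h.2.2.1.symm, h.2.2.2.symm⟩⟩
    unfold pairWeight
    simp only [hiff, G.edgeDensity_comm A B]
  diag A := by simp [pairWeight]
  le_five A B := by
    unfold pairWeight
    split_ifs
    · rw [Nat.ceil_le]
      have : (G.edgeDensity A B : ℝ) ≤ 1 := by exact_mod_cast G.edgeDensity_le_one A B
      push_cast
      linarith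
    · omega
  dense A B h := by
    obtain ⟨hA, hB, -, hu, hd⟩ := pairWeight_spec h
    intro A' hA' B' hB' hmA hmB
    have := hu hA' hB' ((hup A hA).trans hmA) ((hup B hB).trans hmB)
    rw [abs_lt] at this
    rw [card_interedges_eq, mul_assoc]
    exact mul_le_mul_of_nonneg_right (by linarith) (by positivity)
  clique A hA := exists_clique_of_alphaP_lt (by exact_mod_cast hα.trans_lt hA)
  large A B h := hlow A (pairWeight_spec h).1

/-- Edges between two parts are counted by the weight, up to `2η` in density, except on the diagonal
and on nonuniform pairs, where the trivial bound is used. -/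
theorem card_interedges_le_pairWeight (hη : 0 < η) {A B : Finset α} (hA : A ∈ P.parts)
    (hB : B ∈ P.parts) :
    (#(G.interedges A B) : ℝ) ≤ (1 / 5) * (pairWeight G P ε η A B * (#A * #B)) +
      2 * η * (#A * #B) + (if A = B then (#A * #B : ℝ) else 0) +
      (if (A, B) ∈ P.nonUniforms G ε then (#A * #B : ℝ) else 0) := by
  have hp : (0 : ℝ) ≤ #A * #B := by positivity
  have hle : (#(G.interedges A B) : ℝ) ≤ #A * #B := by
    exact_mod_cast G.card_interedges_le_mul A B
  have hw : (0 : ℝ) ≤ (1 / 5) * (pairWeight G P ε η A B * (#A * #B)) := by positivity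
  have hη' : 0 ≤ 2 * η * (#A * #B : ℝ) := by positivity
  by_cases hAB : A = B
  · rw [if_pos hAB]
    split_ifs <;> linarith
  by_cases hu : G.IsUniform ε A B
  · have hn : (A, B) ∉ P.nonUniforms G ε := fun h => ((P.mk_mem_nonUniforms G).1 h).2.2.2 hu
    rw [if_neg hAB, if_neg hn]
    have he : pairWeight G P ε η A B = ⌈5 * ((G.edgeDensity A B : ℝ) - 2 * η)⌉₊ :=
      if_pos ⟨hA, hB, hAB, hu⟩
    have := Nat.le_ceil (5 * ((G.edgeDensity A B : ℝ) - 2 * η))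
    rw [← he] at this
    rw [card_interedges_eq]
    have := mul_le_mul_of_nonneg_right this hp
    linarith
  · have hn : (A, B) ∈ P.nonUniforms G ε := (P.mk_mem_nonUniforms G).2 ⟨hA, hB, hAB, hu⟩
    rw [if_neg hAB, if_pos hn]
    linarith

/-- Summation over all pairs of parts: the main term is bounded by `weighted_turan`, the density
loss by `2η n²`, the diagonal by `η n²` and the nonuniform pairs by `4η n²`. -/
theorem two_mul_edgeCount_le (hη : 0 < η) (hε : 0 < ε) (hεη : ε ≤ η) {N : ℝ}
    (hcard : 0 < Fintype.card α)
    (hN : ∀ A ∈ P.parts, (#A : ℝ) ≤ N) (hN' : N ≤ η * Fintype.card α)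
    (hP : P.IsEquipartition) (hPu : P.IsUniform G ε)
    (hW : Admissible (pairWeight G P ε η)) :
    2 * (edgeCount G : ℝ) ≤ (10 / 19 + 8 * η) * (Fintype.card α : ℝ) ^ 2 := by
  set n : ℝ := (Fintype.card α : ℝ) with hn
  have hsum : ∑ A ∈ P.parts, (#A : ℝ) = n := by
    rw [hn, ← card_univ, ← P.sum_card_parts]
    push_cast
    rfl
  have hne : (univ : Finset α).Nonempty := by
    rw [← card_pos, card_univ]; exact hcard
  have h0 : 2 * (edgeCount G : ℝ) =
      ∑ AB ∈ P.parts ×ˢ P.parts, (#(G.interedges AB.1 AB.2) : ℝ) := by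
    have := (two_mul_edgeCount G).trans (Rel.card_interedges_finpartition G.Adj P P)
    exact_mod_cast this
  have h1 : ∑ AB ∈ P.parts ×ˢ P.parts, (pairWeight G P ε η AB.1 AB.2 : ℝ) * (#AB.1 * #AB.2) ≤
      50 / 19 * n ^ 2 := by
    have := weighted_turan hW P.parts (fun A => (#A : ℝ)) fun _ => by positivity
    rw [hsum, qf, ← sum_product'] at this
    linarith
  have h2 : ∑ AB ∈ P.parts ×ˢ P.parts, (#AB.1 * #AB.2 : ℝ) = n ^ 2 := by
    rw [sum_product, ← hsum, sq, sum_mul_sum]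
  have h3 : ∑ AB ∈ P.parts ×ˢ P.parts, (if AB.1 = AB.2 then (#AB.1 * #AB.2 : ℝ) else 0) ≤
      η * n ^ 2 := by
    rw [sum_product]
    have : ∀ A ∈ P.parts, ∑ B ∈ P.parts, (if A = B then (#A * #B : ℝ) else 0) ≤ #A * N := by
      intro A hA
      rw [sum_ite_eq, if_pos hA]
      exact mul_le_mul_of_nonneg_left (hN A hA) (by positivity)
    refine (sum_le_sum this).trans ?_
    rw [← sum_mul, hsum]
    have : 0 ≤ n := by positivity
    nlinarith
  have h4 : ∑ AB ∈ P.parts ×ˢ P.parts,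
      (if (AB.1, AB.2) ∈ P.nonUniforms G ε then (#AB.1 * #AB.2 : ℝ) else 0) ≤
      4 * η * n ^ 2 := by
    have hlt := hP.sum_nonUniforms_lt' hne hε hPu
    rw [← sum_filter]
    have hs : {AB ∈ P.parts ×ˢ P.parts | (AB.1, AB.2) ∈ P.nonUniforms G ε} ⊆
        P.nonUniforms G ε := fun AB h => (mem_filter.1 h).2
    refine (sum_le_sum_of_subset_of_nonneg hs fun _ _ _ => by positivity).trans (hlt.le.trans ?_)
    have hk : (#P.parts : ℝ) ≤ n := by
      rw [hn, ← card_univ]; exact_mod_cast P.card_parts_le_card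
    rw [card_univ, ← hn]
    have hk0 : (0 : ℝ) ≤ #P.parts := by positivity
    calc ε * (n + #P.parts) ^ 2 ≤ η * (n + n) ^ 2 := by gcongr
      _ = 4 * η * n ^ 2 := by ring
  have h5 : ∑ AB ∈ P.parts ×ˢ P.parts, (#(G.interedges AB.1 AB.2) : ℝ) ≤
      (1 / 5) * ∑ AB ∈ P.parts ×ˢ P.parts, (pairWeight G P ε η AB.1 AB.2 : ℝ) * (#AB.1 * #AB.2) +
      2 * η * ∑ AB ∈ P.parts ×ˢ P.parts, (#AB.1 * #AB.2 : ℝ) +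
      ∑ AB ∈ P.parts ×ˢ P.parts, (if AB.1 = AB.2 then (#AB.1 * #AB.2 : ℝ) else 0) +
      ∑ AB ∈ P.parts ×ˢ P.parts,
        (if (AB.1, AB.2) ∈ P.nonUniforms G ε then (#AB.1 * #AB.2 : ℝ) else 0) := by
    rw [mul_sum, mul_sum, ← sum_add_distrib, ← sum_add_distrib, ← sum_add_distrib]
    refine sum_le_sum fun AB hAB => ?_
    obtain ⟨hA, hB⟩ := mem_product.1 hAB
    exact card_interedges_le_pairWeight hη hA hB
  have : 0 ≤ η * n ^ 2 := by positivity
  rw [h0]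
  nlinarith
end

/-- The density bound with an error `8η`. The parts of the partition have sizes between `n / (2k)`
and `2n / k`, where `k` is the number of parts; `m = 2 (n / k) ε` and the choice of `ε` make
`7 m (32 / η) ^ 6 ≤ n / (2k)`. -/
theorem edgeCount_asymptotic (η : ℝ) (hη : 0 < η) (hη1 : η ≤ 1) :
    ∃ (ε₀ : ℝ) (n₀ : ℕ), 0 < ε₀ ∧ 0 < n₀ ∧
      ∀ (α : Type) [Fintype α] (G : SimpleGraph α), n₀ ≤ Fintype.card α → G.CliqueFree 12 →
        (alphaP 5 G : ℝ) ≤ ε₀ * Fintype.card α →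
        2 * (edgeCount G : ℝ) ≤ (10 / 19 + 8 * η) * (Fintype.card α : ℝ) ^ 2 := by
  set ε : ℝ := (η / 32) ^ 6 / 28 with hεdef
  have hε : 0 < ε := by positivity
  have hεη : ε ≤ η := by
    have h1 : η / 32 ≤ 1 := by linarith
    have := pow_le_of_le_one (by positivity : 0 ≤ η / 32) h1 (by norm_num : 6 ≠ 0)
    linarith
  -- At least `2 / η` parts are requested so that each part has at most `η n` vertices.
  set l : ℕ := ⌈2 / η⌉₊ with hl
  have hl0 : 0 < l := Nat.ceil_pos.2 (by positivity)
  have hb0 : 0 < SzemerediRegularity.bound ε l := SzemerediRegularity.bound_pos _ _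
  refine ⟨ε / SzemerediRegularity.bound ε l, l, by positivity, hl0, ?_⟩
  intro α _ G hn hG hα
  obtain ⟨P, hP, hlP, hPb, hPu⟩ := szemeredi_regularity G hε hn
  have hcard : 0 < Fintype.card α := by omega
  have hk : 0 < #P.parts := by omega
  have hkn : #P.parts ≤ Fintype.card α := by
    rw [← card_univ]; exact P.card_parts_le_card
  set n : ℝ := (Fintype.card α : ℝ) with hndef
  set k : ℝ := (#P.parts : ℝ) with hkdef
  have hk0 : 0 < k := by rw [hkdef]; exact_mod_cast hk
  have hn0 : 0 < n := by rw [hndef]; exact_mod_cast hcard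
  have hkn' : k ≤ n := by rw [hkdef, hndef]; exact_mod_cast hkn
  have hup : ∀ A ∈ P.parts, (#A : ℝ) ≤ 2 * n / k := by
    intro A hA
    have h1 := hP.card_part_le_average_add_one hA
    rw [card_univ] at h1
    have h2 : (#A : ℝ) ≤ ((Fintype.card α / #P.parts : ℕ) : ℝ) + 1 := by exact_mod_cast h1
    have h3 : ((Fintype.card α / #P.parts : ℕ) : ℝ) ≤ n / k := Nat.cast_div_le
    have h4 : 1 ≤ n / k := by rwa [le_div_iff₀ hk0, one_mul]
    rw [mul_div_assoc]
    linarith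
  have hlow : ∀ A ∈ P.parts, n / (2 * k) ≤ (#A : ℝ) := by
    intro A hA
    have h1 := hP.average_le_card_part hA
    rw [card_univ] at h1
    have h2 : Fintype.card α ≤ 2 * #P.parts * #A := by
      have h3 := Nat.div_add_mod (Fintype.card α) #P.parts
      have h4 := Nat.mod_lt (Fintype.card α) hk
      have h5 : 1 ≤ Fintype.card α / #P.parts := (Nat.one_le_div_iff hk).2 hkn
      nlinarith
    rw [div_le_iff₀ (by positivity), hndef, hkdef]
    have : (Fintype.card α : ℝ) ≤ 2 * #P.parts * #A := by exact_mod_cast h2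
    linarith
  have hm : 0 < 2 * n / k * ε := by positivity
  have hαm : (alphaP 5 G : ℝ) ≤ 2 * n / k * ε := by
    refine hα.trans ?_
    have hkb : k ≤ SzemerediRegularity.bound ε l := by rw [hkdef]; exact_mod_cast hPb
    have : ε / SzemerediRegularity.bound ε l * n ≤ ε / k * n := by gcongr
    refine this.trans ?_
    rw [show 2 * n / k * ε = 2 * (ε / k * n) by ring]
    have : 0 ≤ ε / k * n := by positivity
    linarith
  have hred := reduced_of_uniform (G := G) (P := P) (m := 2 * n / k * ε) hη hη1 hεη hm hαm
    (fun A hA => mul_le_mul_of_nonneg_right (hup A hA) hε.le) (fun A hA => by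
      refine le_trans (le_of_eq ?_) (hlow A hA)
      rw [hεdef]
      field_simp
      norm_num)
  refine two_mul_edgeCount_le hη hε hεη hcard hup ?_ hP hPu (hred.admissible hG)
  have h1 : 2 / η ≤ k := (Nat.le_ceil _).trans (by rw [hkdef]; exact_mod_cast hlP)
  rw [div_le_iff₀ hη] at h1
  rw [div_le_iff₀ hk0]
  nlinarith

/-- Ramsey–Turán upper bound: ρ₅(12) ≤ 10/19. -/
theorem rt_bound_11 (δ : ℝ) (hδ : 0 < δ) :
    ∃ (ε : ℝ) (n₀ : ℕ), 0 < ε ∧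
      ∀ (n : ℕ) (G : SimpleGraph (Fin n)), n₀ ≤ n → G.CliqueFree 12 →
        (alphaP 5 G : ℝ) ≤ ε * (n : ℝ) →
        (edgeCount G : ℝ) ≤ (10 / 19 + δ) * (n.choose 2 : ℝ) := by
  obtain ⟨ε, n₀, hε, hn₀, h⟩ := edgeCount_asymptotic (min (δ / 16) 1) (by positivity)
    (min_le_right _ _)
  -- The lower bound on `n` absorbs the difference between `n² / 2` and `n.choose 2`.
  refine ⟨ε, max n₀ ⌈2 * (1 + δ) / δ⌉₊, hε, fun n G hn hG hα => ?_⟩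
  have h1 := h (Fin n) G (by simpa using (le_max_left _ _).trans hn) hG (by simpa using hα)
  rw [Fintype.card_fin] at h1
  have h2 : 2 * (1 + δ) / δ ≤ n :=
    (Nat.le_ceil _).trans (by exact_mod_cast (le_max_right _ _).trans hn)
  rw [div_le_iff₀ hδ] at h2
  have h3 := min_le_left (δ / 16) 1
  rw [Nat.cast_choose_two]
  have h4 : (0 : ℝ) ≤ n := by positivity
  have h5 := mul_le_mul_of_nonneg_right h3 (sq_nonneg (n : ℝ))
  have h6 := mul_le_mul_of_nonneg_left h2 h4
  nlinarith
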